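/- Let Γ be a finite connected simple graph with r+1 vertices, where r+1 ≥ 3, and with n edges, where n ≥ 3, and let F_Γ be its Kirchhoff polynomial. Then for every point a ∈ (ℝ_{>0})^n, the Hessian matrix H_{F_Γ} evaluated at a is nonsingular and has exactly n−1 negative eigenvalues and exactly one positive eigenvalue; in particular (−1)^{n−1}·det(H_{F_Γ})(a) > 0. -/

import Mathlib

/-!
Orient the edges, fix a root `v₀`, and let `B` be the incidence matrix with the column of `v₀`
removed. For weights `x` put `L x = Bᵀ * diagonal x * B`, the reduced weighted Laplacian. By the
matrix-tree theorem the Kirchhoff polynomial takes the value `det (L x)` at `x`.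

Write `L = L a` and `K = B * L⁻¹ * Bᵀ`. The Kirchhoff polynomial is affine in each variable, so its
second partial derivatives are second differences with unit steps, and the matrix determinant lemma
gives `H i j = det L * (K i i * K j j - K i j * K j i)`. Hence, with `N = L v`, the Hessian form is
`v ⬝ᵥ (H *ᵥ v) = det L * (trace (L⁻¹ * N) ^ 2 - trace (L⁻¹ * N * (L⁻¹ * N)))`.

On the hyperplane `trace (L⁻¹ * N) = 0` the form is negative definite: `L` is positive definite
because the graph is connected, so writing `L⁻¹ = C ^ 2` turns the second trace into the squared
Frobenius norm of `C * N * C`, and `N = 0` forces `v = 0` since the graph is simple. At `v = a` we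
have `N = L`, and the form takes the value `det L * (r ^ 2 - r) > 0`. A form that is positive
somewhere and negative definite on a hyperplane has exactly one positive eigenvalue, and all the
others are negative.

The matrix-tree theorem follows from the Cauchy-Binet formula: the minor of `B` on a set of `r`
edges is nonzero over a domain exactly when the edges connect all vertices, as the kernel consists
of the functions vanishing at `v₀` and constant on components. Applied to `ZMod p` for every prime
`p`, this shows that the integral minor of a spanning tree is `±1`.
-/

open MvPolynomial

/-- A spanning tree of a graph `G`, given as a set `T` of edges of `G` with `|V| - 1` edges
whose spanning subgraph is connected. -/
def IsSpanningTree {V : Type} [Fintype V] [DecidableEq V] (G : SimpleGraph V)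
    (T : Finset G.edgeSet) : Prop :=
  T.card = Fintype.card V - 1 ∧
    (SimpleGraph.fromEdgeSet (Subtype.val '' (T : Set G.edgeSet))).Connected

open scoped Classical in
/-- The Kirchhoff polynomial of a graph. -/
noncomputable def kirchhoff {V : Type} [Fintype V] [DecidableEq V] (G : SimpleGraph V)
    [Fintype G.edgeSet] : MvPolynomial G.edgeSet ℝ :=
  ∑ T : Finset G.edgeSet, if IsSpanningTree G T then ∏ e ∈ T, X e else 0

section Signature

open Matrix Finset

variable {ι : Type*} [Fintype ι]

theorem card_filter_neg_of_unique_pos {f : ι → ℝ} {k : ι} (hk : 0 < f k)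
    (hf : ∀ i ≠ k, f i < 0) : #{i | f i < 0} = Fintype.card ι - 1 := by
  classical
  have : ({i | f i < 0} : Finset ι) = univ.erase k := by
    ext i
    rcases eq_or_ne i k with rfl | hi <;> simp_all [hk.le]
  rw [this, card_erase_of_mem (mem_univ k), card_univ]

theorem card_filter_pos_of_unique_pos {f : ι → ℝ} {k : ι} (hk : 0 < f k)
    (hf : ∀ i ≠ k, f i < 0) : #{i | 0 < f i} = 1 := by
  refine card_eq_one.2 ⟨k, ?_⟩
  ext i
  rcases eq_or_ne i k with rfl | hi <;> simp_all [(hf _ _).le]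

theorem neg_one_pow_mul_prod_pos_of_unique_pos {f : ι → ℝ} {k : ι} (hk : 0 < f k)
    (hf : ∀ i ≠ k, f i < 0) : 0 < (-1) ^ (Fintype.card ι - 1) * ∏ i, f i := by
  classical
  rw [← mul_prod_erase _ _ (mem_univ k), mul_left_comm, ← card_univ,
    ← card_erase_of_mem (mem_univ k), ← prod_neg]
  exact mul_pos hk (prod_pos fun i hi => neg_pos.2 (hf i (ne_of_mem_erase hi)))

/-- A vector supported on `{i, k}` can be chosen in any given hyperplane. -/
theorem exists_unique_pos_of_sum_mul_sq_neg {f l a : ι → ℝ}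
    (hneg : ∀ w ≠ 0, l ⬝ᵥ w = 0 → ∑ i, f i * w i ^ 2 < 0) (hpos : 0 < ∑ i, f i * a i ^ 2) :
    ∃ k, 0 < f k ∧ ∀ i ≠ k, f i < 0 := by
  classical
  obtain ⟨k, hk⟩ : ∃ k, 0 < f k := by
    by_contra! hle
    exact hpos.not_ge (sum_nonpos fun i _ => mul_nonpos_of_nonpos_of_nonneg (hle i) (sq_nonneg _))
  refine ⟨k, hk, fun i hik => ?_⟩
  by_contra! hi
  obtain ⟨c, d, hcd, hl⟩ : ∃ c d : ℝ, (c ≠ 0 ∨ d ≠ 0) ∧ c * l i + d * l k = 0 := by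
    by_cases h : l i = 0
    · exact ⟨1, 0, by simp, by simp [h]⟩
    · exact ⟨-l k, l i, Or.inr h, by ring⟩
  have hform : ∑ j, f j * (Pi.single i c + Pi.single k d : ι → ℝ) j ^ 2 =
      f i * c ^ 2 + f k * d ^ 2 := by
    rw [Fintype.sum_eq_add i k hik fun j hj => by simp [hj.1, hj.2]]
    simp [hik, hik.symm]
  have hne : (Pi.single i c + Pi.single k d : ι → ℝ) ≠ 0 := fun h => by
    have hc := congrFun h i
    have hd := congrFun h k
    simp_all
  have := hneg _ hne (by simpa [dotProduct_add, mul_comm] using hl)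
  rw [hform] at this
  exact this.not_ge (by positivity)

theorem exists_unique_pos_eigenvalue [DecidableEq ι] {H : Matrix ι ι ℝ} (hH : H.IsHermitian)
    {l a : ι → ℝ} (hneg : ∀ v ≠ 0, l ⬝ᵥ v = 0 → v ⬝ᵥ (H *ᵥ v) < 0) (hpos : 0 < a ⬝ᵥ (H *ᵥ a)) :
    ∃ k, 0 < hH.eigenvalues k ∧ ∀ i ≠ k, hH.eigenvalues i < 0 := by
  set U : Matrix ι ι ℝ := ↑hH.eigenvectorUnitary
  have hUU : Uᵀ * U = 1 := Unitary.coe_star_mul_self hH.eigenvectorUnitary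
  have hform : ∀ v, v ⬝ᵥ (H *ᵥ v) = ∑ i, hH.eigenvalues i * (Uᵀ *ᵥ v) i ^ 2 := by
    intro v
    have hspec : H = U * diagonal hH.eigenvalues * Uᵀ := hH.spectral_theorem
    conv_lhs => rw [hspec, ← mulVec_mulVec, ← mulVec_mulVec, dotProduct_mulVec, ← mulVec_transpose]
    exact sum_congr rfl fun i _ => by rw [mulVec_diagonal]; ring
  refine exists_unique_pos_of_sum_mul_sq_neg (l := Uᵀ *ᵥ l) (a := Uᵀ *ᵥ a)
    (fun w hw hlw => ?_) (hform a ▸ hpos)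
  have hw' : Uᵀ *ᵥ (U *ᵥ w) = w := by rw [mulVec_mulVec, hUU, one_mulVec]
  have := hneg (U *ᵥ w) (fun h => hw (by rw [← hw', h, mulVec_zero]))
    (by rwa [dotProduct_mulVec, ← mulVec_transpose])
  rwa [hform, hw'] at this

end Signature

section Trace

open Matrix
open scoped ComplexOrder MatrixOrder

theorem trace_mul_mul_self_pos {𝕜 n : Type*} [RCLike 𝕜] [Fintype n] {P N : Matrix n n 𝕜}
    (hP : P.PosDef) (hN : N.IsHermitian) (hN0 : N ≠ 0) : 0 < (P * N * (P * N)).trace := by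
  classical
  obtain ⟨C, hCunit, hC, rfl⟩ :=
    CStarAlgebra.isStrictlyPositive_iff_exists_isUnit_and_isSelfAdjoint_and_eq_mul_self.1
      hP.isStrictlyPositive
  have hS : (C * N * C)ᴴ = C * N * C := by
    simp only [conjTranspose_mul, hC.isHermitian.eq, hN.eq, Matrix.mul_assoc]
  have htrace : (C * C * N * (C * C * N)).trace = ((C * N * C)ᴴ * (C * N * C)).trace := by
    rw [hS, Matrix.mul_assoc C C N, Matrix.mul_assoc C, trace_mul_comm]
    simp only [Matrix.mul_assoc]
  rw [htrace]
  refine (posSemidef_conjTranspose_mul_self _).trace_nonneg.lt_of_ne' fun h => hN0 ?_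
  have := trace_conjTranspose_mul_self_eq_zero_iff.1 h
  rwa [hCunit.mul_left_eq_zero, hCunit.mul_right_eq_zero] at this

end Trace

section CauchyBinet

open Matrix Finset

theorem range_coe_equiv {α β : Type*} {T : Finset β} (e : α ≃ T) :
    Set.range (fun i => (e i : β)) = T :=
  (EquivLike.range_comp Subtype.val e).trans Subtype.range_coe

variable {m n R : Type*} [Fintype m]

theorem injective_enum_comp_perm
    (e : ∀ T : {T : Finset n // #T = Fintype.card m}, m ≃ T.1) :
    Function.Injective fun (q : {T : Finset n // #T = Fintype.card m} × Equiv.Perm m) i =>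
      (e q.1 (q.2 i) : n) := by
  rintro ⟨T, σ⟩ ⟨T', σ'⟩ h
  obtain rfl : T = T' :=
    Subtype.ext <| coe_injective <| (range_coe_equiv (σ.trans (e T))).symm.trans <|
      (congrArg Set.range h).trans (range_coe_equiv (σ'.trans (e T')))
  obtain rfl : σ = σ' := Equiv.ext fun i => (e T).injective <| Subtype.ext <| congrFun h i
  rfl

theorem exists_enum_comp_perm_eq (e : ∀ T : {T : Finset n // #T = Fintype.card m}, m ≃ T.1)
    {p : m → n} (hp : p.Injective) :
    ∃ T, ∃ σ : Equiv.Perm m, (fun i => (e T (σ i) : n)) = p := by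
  let T : {T : Finset n // #T = Fintype.card m} := ⟨univ.map ⟨p, hp⟩, card_map _⟩
  let q : m ≃ T.1 := Equiv.ofBijective (fun i => ⟨p i, mem_map_of_mem ⟨p, hp⟩ (mem_univ i)⟩)
    ⟨fun i j h => hp (congrArg Subtype.val h), fun ⟨x, hx⟩ => by simpa [T] using hx⟩
  exact ⟨T, q.trans (e T).symm, funext fun i => by
    rw [Equiv.trans_apply, Equiv.apply_symm_apply]; rfl⟩

variable [DecidableEq m] [CommRing R]

theorem det_submatrix_mul_det_submatrix (A : Matrix m n R) (B : Matrix n m R) (f : m → n) :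
    (A.submatrix id f).det * (B.submatrix f id).det =
      ∑ σ : Equiv.Perm m, (∏ i, A i (f (σ i))) * (B.submatrix (f ∘ σ) id).det := by
  rw [← det_transpose, det_apply', sum_mul]
  refine sum_congr rfl fun σ _ => ?_
  have hperm : (B.submatrix (f ∘ σ) id).det = σ.sign * (B.submatrix f id).det :=
    det_permute σ (B.submatrix f id)
  simp only [hperm, transpose_apply, submatrix_apply, id_eq]
  ring

variable [Fintype n]

theorem det_mul_eq_sum_prod_mul_det_submatrix (A : Matrix m n R) (B : Matrix n m R) :
    (A * B).det = ∑ p : m → n, (∏ i, A i (p i)) * (B.submatrix p id).det := by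
  classical
  have hrows : A * B = of fun i => ∑ j, A i j • B j := by
    ext i k
    simp [mul_apply]
  rw [hrows]
  refine ((detRowAlternating (R := R) (n := m)).toMultilinearMap.map_sum
    fun i j => A i j • B j).trans (sum_congr rfl fun p _ => ?_)
  exact detRowAlternating.toMultilinearMap.map_smul_univ (fun i => A i (p i)) fun i => B (p i)

theorem cauchy_binet (A : Matrix m n R) (B : Matrix n m R)
    (e : ∀ T : {T : Finset n // #T = Fintype.card m}, m ≃ T.1) :
    (A * B).det = ∑ T, (A.submatrix id fun i => (e T i : n)).det *
      (B.submatrix (fun i => (e T i : n)) id).det := by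
  simp only [det_submatrix_mul_det_submatrix]
  rw [det_mul_eq_sum_prod_mul_det_submatrix, ← Fintype.sum_prod_type']
  refine (Fintype.sum_of_injective _ (injective_enum_comp_perm e) _ _ (fun p hp => ?_)
    fun _ => rfl).symm
  have hp' : ¬ p.Injective := fun h => hp <| by
    obtain ⟨T, σ, h⟩ := exists_enum_comp_perm_eq e h
    exact ⟨(T, σ), h⟩
  obtain ⟨i, j, hij, hne⟩ := Function.not_injective_iff.1 hp'
  rw [det_zero_of_row_eq hne (by ext; simp [hij]), mul_zero]

end CauchyBinet

section WeightedGram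

open Matrix Finset

variable {E W R : Type*} [Fintype E] [DecidableEq E] [CommRing R]

/-- The Gram matrix `∑ e, x e • (B e)ᵀ (B e)` of the rows of `B` with weights `x`. When `B` is a
reduced incidence matrix, it is the reduced weighted Laplacian. -/
def weightedGram (B : Matrix E W R) (x : E → R) : Matrix W W R :=
  Bᵀ * diagonal x * B

theorem weightedGram_apply (B : Matrix E W R) (x : E → R) (u w : W) :
    weightedGram B x u w = ∑ e, x e * (B e u * B e w) := by
  rw [weightedGram, mul_apply]
  simp only [mul_diagonal, transpose_apply]
  exact sum_congr rfl fun e _ => by ring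

theorem transpose_weightedGram (B : Matrix E W R) (x : E → R) :
    (weightedGram B x)ᵀ = weightedGram B x := by
  simp only [weightedGram, transpose_mul, diagonal_transpose, transpose_transpose, Matrix.mul_assoc]

theorem dotProduct_weightedGram_mulVec [Fintype W] (B : Matrix E W R) (x : E → R) (g h : W → R) :
    g ⬝ᵥ (weightedGram B x *ᵥ h) = ∑ e, x e * ((B *ᵥ g) e * (B *ᵥ h) e) := by
  rw [weightedGram, ← mulVec_mulVec, ← mulVec_mulVec, dotProduct_mulVec, vecMul_transpose]
  refine sum_congr rfl fun e _ => ?_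
  rw [mulVec_diagonal]
  ring

theorem weightedGram_add_sum_single {m : Type*} [Fintype m] (B : Matrix E W R) (x : E → R)
    (s : m → E) :
    weightedGram B (x + ∑ k, Pi.single (s k) 1) =
      weightedGram B x + (B.submatrix s id)ᵀ * B.submatrix s id := by
  ext u w
  simp only [Matrix.add_apply, weightedGram_apply, Pi.add_apply, add_mul, sum_add_distrib,
    Finset.sum_apply, sum_mul, mul_apply, transpose_apply, submatrix_apply, id]
  rw [sum_comm]
  simp [Pi.single_apply]

variable [Fintype W] [DecidableEq W]

theorem det_weightedGram (B : Matrix E W R) (x : E → R)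
    (e : ∀ T : {T : Finset E // #T = Fintype.card W}, W ≃ T.1) :
    (weightedGram B x).det =
      ∑ T, (∏ i ∈ T.1, x i) * (B.submatrix (fun i => (e T i : E)) id).det ^ 2 := by
  rw [weightedGram, cauchy_binet _ _ e]
  refine sum_congr rfl fun T _ => ?_
  have hrow : (Bᵀ * diagonal x).submatrix id (fun i => (e T i : E)) =
      of fun i j => x (e T j) * (B.submatrix (fun i => (e T i : E)) id)ᵀ i j := by
    ext i j
    simp [mul_comm]
  rw [hrow, det_mul_row, det_transpose, (e T).prod_comp fun i => x i, prod_coe_sort, sq, mul_assoc]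

/-- The transfer resistance matrix `B L⁻¹ Bᵀ` of the network with incidence matrix `B`,
conductances `x` and Laplacian `L = weightedGram B x`. -/
noncomputable def resistanceMatrix (B : Matrix E W R) (x : E → R) : Matrix E E R :=
  B * (weightedGram B x)⁻¹ * Bᵀ

theorem det_weightedGram_add_sum_single {m : Type*} [Fintype m] [DecidableEq m]
    {B : Matrix E W R} {x : E → R} (hx : IsUnit (weightedGram B x).det) (s : m → E) :
    (weightedGram B (x + ∑ k, Pi.single (s k) 1)).det =
      (weightedGram B x).det * (1 + (resistanceMatrix B x).submatrix s s).det := by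
  rw [weightedGram_add_sum_single, det_add_mul _ _ hx]
  rfl

theorem det_weightedGram_second_difference {B : Matrix E W R} {x : E → R}
    (hx : IsUnit (weightedGram B x).det) (i j : E) :
    (weightedGram B (x + Pi.single i 1 + Pi.single j 1)).det
        - (weightedGram B (x + Pi.single i 1)).det - (weightedGram B (x + Pi.single j 1)).det
        + (weightedGram B x).det =
      (weightedGram B x).det * (resistanceMatrix B x i i * resistanceMatrix B x j j
        - resistanceMatrix B x i j * resistanceMatrix B x j i) := by
  have hone (k : E) := det_weightedGram_add_sum_single hx ![k]
  have htwo := det_weightedGram_add_sum_single hx ![i, j]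
  simp only [Fin.sum_univ_one, Fin.sum_univ_two, det_fin_one, det_fin_two, cons_val_zero,
    cons_val_one, Matrix.add_apply, submatrix_apply, one_apply_eq, ne_eq, zero_ne_one, one_ne_zero,
    not_false_eq_true, one_apply_ne, zero_add, ← add_assoc] at hone htwo
  rw [hone, hone, htwo]
  ring

end WeightedGram

section MultiAffine

open Finset

variable {σ R : Type*} [CommRing R] {p : MvPolynomial σ R}

theorem degreeOf_pderiv_le (i j : σ) (p : MvPolynomial σ R) :
    degreeOf i (pderiv j p) ≤ degreeOf i p := by
  rw [p.as_sum, map_sum]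
  refine (degreeOf_sum_le _ _ _).trans (Finset.sup_le fun m hm => ?_)
  rw [pderiv_monomial, ← p.as_sum]
  refine degreeOf_le_iff.2 fun s hs => ?_
  obtain rfl := mem_singleton.1 (support_monomial_subset hs)
  exact (tsub_le_self (a := m)) i |>.trans (degreeOf_le_iff.1 le_rfl m hm)

theorem eval_add_single_of_degreeOf_le_one [DecidableEq σ] {j : σ} (hp : degreeOf j p ≤ 1)
    (a : σ → R) : eval (a + Pi.single j 1) p = eval a p + eval a (pderiv j p) := by
  rw [p.as_sum]
  simp only [map_sum, ← sum_add_distrib, pderiv_monomial, eval_monomial]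
  refine sum_congr rfl fun m hm => ?_
  have hsplit (b : σ → R) (m : σ →₀ ℕ) :
      (m.prod fun i k => b i ^ k) = b j ^ m j * (m.erase j).prod fun i k => b i ^ k :=
    (Finsupp.mul_prod_erase' m j _ fun i => pow_zero (b i)).symm
  have herase : (m - Finsupp.single j 1).erase j = m.erase j := by
    ext i
    rcases eq_or_ne i j with rfl | hi <;> simp [Finsupp.erase_ne, *]
  have hoff : ((m.erase j).prod fun i k => (a + Pi.single j 1 : σ → R) i ^ k) =
      (m.erase j).prod fun i k => a i ^ k :=
    Finsupp.prod_congr fun i hi => by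
      simp [Pi.single_eq_of_ne (show i ≠ j by rintro rfl; simp at hi)]
  rw [hsplit _ m, hsplit a m, hsplit a (m - _), herase, hoff]
  have hj : m j ≤ 1 := degreeOf_le_iff.1 hp m hm
  interval_cases hmj : m j
  · simp
  · simp only [hmj, Pi.add_apply, Pi.single_eq_same, pow_one, Nat.cast_one, mul_one,
      Finsupp.tsub_apply, Finsupp.single_eq_same, tsub_self, pow_zero, one_mul]
    ring

theorem eval_pderiv_pderiv_of_degreeOf_le_one [DecidableEq σ] (hp : ∀ i, degreeOf i p ≤ 1)
    (a : σ → R) (i j : σ) :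
    eval a (pderiv i (pderiv j p)) =
      eval (a + Pi.single i 1 + Pi.single j 1) p - eval (a + Pi.single i 1) p
        - eval (a + Pi.single j 1) p + eval a p := by
  rw [eval_add_single_of_degreeOf_le_one (hp j), eval_add_single_of_degreeOf_le_one (hp j),
    eval_add_single_of_degreeOf_le_one ((degreeOf_pderiv_le i j p).trans (hp i))]
  ring

end MultiAffine

section Hessian

open Matrix

/-- The Hessian matrix of the polynomial `p` evaluated at the point `a`. -/
noncomputable def hessianMatrix {σ R : Type*} [CommSemiring R] (p : MvPolynomial σ R) (a : σ → R) :
    Matrix σ σ R :=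
  of fun i j => eval a (pderiv i (pderiv j p))

theorem pderiv_pderiv_comm {σ R : Type*} [CommRing R] (i j : σ) (p : MvPolynomial σ R) :
    pderiv i (pderiv j p) = pderiv j (pderiv i p) := by
  classical
  have hcomm : ⁅pderiv (R := R) i, pderiv j⁆ = 0 := derivation_ext fun k => by
    rw [Derivation.commutator_apply]
    simp [pderiv_X, Pi.single_apply, apply_ite]
  rw [← sub_eq_zero, ← Derivation.commutator_apply, hcomm, Derivation.zero_apply]

theorem isHermitian_hessianMatrix {σ : Type*} (p : MvPolynomial σ ℝ) (a : σ → ℝ) :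
    (hessianMatrix p a).IsHermitian := by
  ext i j
  simp [hessianMatrix, pderiv_pderiv_comm i j]

variable {E W R : Type*} [Fintype E] [DecidableEq E] [Fintype W]

theorem diag_mul_mul_transpose_dotProduct [CommRing R] (B : Matrix E W R) (P : Matrix W W R)
    (v : E → R) : (B * P * Bᵀ).diag ⬝ᵥ v = (P * weightedGram B v).trace := by
  calc (B * P * Bᵀ).diag ⬝ᵥ v = (B * (P * Bᵀ * diagonal v)).trace := by
        simp only [← Matrix.mul_assoc, dotProduct, trace, diag_apply, mul_diagonal]
    _ = (P * weightedGram B v).trace := by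
        rw [trace_mul_comm]
        simp only [weightedGram, Matrix.mul_assoc]

theorem dotProduct_hadamard_transpose_mulVec [CommRing R] (B : Matrix E W R) (P : Matrix W W R)
    (v : E → R) :
    v ⬝ᵥ (((B * P * Bᵀ) ⊙ (B * P * Bᵀ)ᵀ) *ᵥ v) =
      (P * weightedGram B v * (P * weightedGram B v)).trace := by
  rw [dotProduct_mulVec, dotProduct_vecMul_hadamard, transpose_mul, transpose_transpose,
    diagonal_transpose]
  calc (diagonal v * (B * P * Bᵀ) * (diagonal v * (B * P * Bᵀ))).trace
      = ((diagonal v * B) * (P * weightedGram B v * P * Bᵀ)).trace := by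
        simp only [weightedGram, Matrix.mul_assoc]
    _ = (P * weightedGram B v * (P * weightedGram B v)).trace := by
        rw [trace_mul_comm]
        simp only [weightedGram, Matrix.mul_assoc]

theorem posDef_weightedGram {B : Matrix E W ℝ} {x : E → ℝ} (hB : B.mulVec.Injective)
    (hx : ∀ e, 0 < x e) : (weightedGram B x).PosDef :=
  (PosDef.diagonal hx).conjTranspose_mul_mul_same hB

variable [DecidableEq W]

theorem hessianMatrix_eq_of_eval_eq_det [CommRing R] {p : MvPolynomial E R} {B : Matrix E W R}
    {a : E → R} (hp : ∀ i, degreeOf i p ≤ 1) (hdet : ∀ x, eval x p = (weightedGram B x).det)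
    (ha : IsUnit (weightedGram B a).det) :
    hessianMatrix p a = (weightedGram B a).det •
      (vecMulVec (resistanceMatrix B a).diag (resistanceMatrix B a).diag
        - resistanceMatrix B a ⊙ (resistanceMatrix B a)ᵀ) := by
  ext i j
  simp only [hessianMatrix, of_apply, eval_pderiv_pderiv_of_degreeOf_le_one hp, hdet,
    det_weightedGram_second_difference ha, Matrix.smul_apply, Matrix.sub_apply, vecMulVec_apply,
    hadamard_apply, diag_apply, transpose_apply, smul_eq_mul]

theorem dotProduct_hessianMatrix_mulVec [CommRing R] {p : MvPolynomial E R} {B : Matrix E W R}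
    {a : E → R} (hp : ∀ i, degreeOf i p ≤ 1) (hdet : ∀ x, eval x p = (weightedGram B x).det)
    (ha : IsUnit (weightedGram B a).det) (v : E → R) :
    v ⬝ᵥ (hessianMatrix p a *ᵥ v) = (weightedGram B a).det *
      (((weightedGram B a)⁻¹ * weightedGram B v).trace ^ 2
        - ((weightedGram B a)⁻¹ * weightedGram B v *
          ((weightedGram B a)⁻¹ * weightedGram B v)).trace) := by
  rw [hessianMatrix_eq_of_eval_eq_det hp hdet ha, smul_mulVec, dotProduct_smul, sub_mulVec,
    dotProduct_sub, resistanceMatrix, dotProduct_hadamard_transpose_mulVec, vecMulVec_mulVec,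
    dotProduct_smul, dotProduct_comm v, diag_mul_mul_transpose_dotProduct]
  simp [sq]

theorem exists_unique_pos_eigenvalue_hessianMatrix {p : MvPolynomial E ℝ} {B : Matrix E W ℝ}
    {a : E → ℝ} (hp : ∀ i, degreeOf i p ≤ 1) (hdet : ∀ x, eval x p = (weightedGram B x).det)
    (hL : (weightedGram B a).PosDef) (hB : ∀ x, weightedGram B x = 0 → x = 0)
    (hW : 1 < Fintype.card W) :
    ∃ k, 0 < (isHermitian_hessianMatrix p a).eigenvalues k ∧
      ∀ i ≠ k, (isHermitian_hessianMatrix p a).eigenvalues i < 0 := by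
  have hunit : IsUnit (weightedGram B a).det := hL.det_pos.ne'.isUnit
  have hform := dotProduct_hessianMatrix_mulVec hp hdet hunit
  refine exists_unique_pos_eigenvalue _ (l := (resistanceMatrix B a).diag) (a := a)
    (fun v hv hlv => ?_) ?_
  · rw [resistanceMatrix, diag_mul_mul_transpose_dotProduct] at hlv
    have hsymm : (weightedGram B v).IsHermitian := transpose_weightedGram B v
    have htrace := trace_mul_mul_self_pos hL.inv hsymm (mt (hB v) hv)
    rw [hform, hlv]
    nlinarith [hL.det_pos]
  · rw [hform, nonsing_inv_mul _ hunit, Matrix.one_mul, trace_one]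
    have : (1 : ℝ) < Fintype.card W := mod_cast hW
    exact mul_pos hL.det_pos (by nlinarith)

end Hessian

section Incidence

open Matrix Finset

variable {E V : Type*} {src tgt : E → V} {S : Set E}

/-- The simple graph joining the endpoints of the edges in `S`, for a multigraph on `V` whose edge
`e : E` runs from `src e` to `tgt e`. -/
def edgeGraph (src tgt : E → V) (S : Set E) : SimpleGraph V :=
  SimpleGraph.fromEdgeSet ((fun e => s(src e, tgt e)) '' S)

theorem edgeGraph_reachable_src_tgt {e : E} (he : e ∈ S) :
    (edgeGraph src tgt S).Reachable (src e) (tgt e) := by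
  by_cases h : src e = tgt e
  · rw [h]
  · exact SimpleGraph.Adj.reachable ⟨⟨e, he, rfl⟩, h⟩

theorem eq_of_edgeGraph_reachable {α : Type*} {f : V → α} (hf : ∀ e ∈ S, f (src e) = f (tgt e))
    {u v : V} (huv : (edgeGraph src tgt S).Reachable u v) : f u = f v := by
  obtain ⟨p⟩ := huv
  induction p with
  | nil => rfl
  | cons hadj _ ih =>
    obtain ⟨⟨e, he, hends⟩, -⟩ := hadj
    rw [← ih]
    obtain ⟨rfl, rfl⟩ | ⟨rfl, rfl⟩ := Sym2.eq_iff.1 hends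
    · exact hf e he
    · exact (hf e he).symm

variable [DecidableEq V]

/-- The oriented incidence matrix of the multigraph with edges `src e ⟶ tgt e`, with the column of
the root `v₀` deleted. -/
def redIncMatrix (R : Type*) [Ring R] (src tgt : E → V) (v₀ : V) : Matrix E {v // v ≠ v₀} R :=
  of fun e w => (Pi.single (src e) 1 - Pi.single (tgt e) 1 : V → R) w

theorem map_redIncMatrix {R R' : Type*} [Ring R] [Ring R'] (φ : R →+* R') (v₀ : V) :
    (redIncMatrix R src tgt v₀).map φ = redIncMatrix R' src tgt v₀ := by
  ext e w
  simp [redIncMatrix, Pi.single_apply, apply_ite φ]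

theorem cast_det_redIncMatrix_submatrix [Fintype V] {R : Type*} [CommRing R] {v₀ : V}
    (s : {v // v ≠ v₀} → E) :
    (((redIncMatrix ℤ src tgt v₀).submatrix s id).det : R) =
      ((redIncMatrix R src tgt v₀).submatrix s id).det := by
  rw [← map_redIncMatrix (Int.castRingHom R), submatrix_map]
  exact (Int.castRingHom R).map_det _

theorem redIncMatrix_mulVec_sub [Fintype V] {R : Type*} [CommRing R] (v₀ : V) (f : V → R) (e : E) :
    (redIncMatrix R src tgt v₀ *ᵥ fun w => f w - f v₀) e = f (src e) - f (tgt e) := by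
  let d : V → R := Pi.single (src e) 1 - Pi.single (tgt e) 1
  calc ∑ w : {v // v ≠ v₀}, d w * (f w - f v₀) = ∑ v, d v * (f v - f v₀) := by
        rw [Fintype.sum_eq_add_sum_subtype_ne _ v₀, sub_self, mul_zero, zero_add]
    _ = f (src e) - f (tgt e) := by
        simp [d, sub_mul, sum_sub_distrib, Pi.single_apply]

theorem connected_edgeGraph_iff_ker_redIncMatrix [Fintype V] (R : Type*) [CommRing R]
    [Nontrivial R] (v₀ : V) :
    (edgeGraph src tgt S).Connected ↔
      ∀ g, (∀ e ∈ S, (redIncMatrix R src tgt v₀ *ᵥ g) e = 0) → g = 0 := by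
  classical
  refine ⟨fun hS g hg => ?_, fun hker => ?_⟩
  · let f : V → R := fun v => if h : v ≠ v₀ then g ⟨v, h⟩ else 0
    have hfg : g = fun w : {v // v ≠ v₀} => f w - f v₀ := by
      ext w
      simp [f, w.2]
    have hconst : ∀ v, f v = f v₀ := fun v =>
      eq_of_edgeGraph_reachable (fun e he => sub_eq_zero.1 <| by
        rw [← redIncMatrix_mulVec_sub v₀, ← hfg, hg e he]) (hS v v₀)
    rw [hfg]
    exact funext fun w => sub_eq_zero.2 (hconst w)
  · let f : V → R := fun v => if (edgeGraph src tgt S).Reachable v₀ v then 1 else 0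
    have hf : ∀ e ∈ S, f (src e) = f (tgt e) := fun e he => by
      have h := edgeGraph_reachable_src_tgt (src := src) (tgt := tgt) he
      simp only [f, show (edgeGraph src tgt S).Reachable v₀ (src e) ↔ _ from
        ⟨fun h' => h'.trans h, fun h' => h'.trans h.symm⟩]
    have hzero := hker (fun w => f w - f v₀) fun e he => by
      rw [redIncMatrix_mulVec_sub, hf e he, sub_self]
    refine (SimpleGraph.connected_iff_exists_forall_reachable _).2 ⟨v₀, fun v => ?_⟩
    by_contra hv
    have hne : v ≠ v₀ := fun h => hv (h ▸ .rfl)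
    simpa [f, hv] using congrFun hzero ⟨v, hne⟩

theorem redIncMatrix_mulVec_injective [Fintype V] (R : Type*) [CommRing R] [Nontrivial R] (v₀ : V)
    (h : (edgeGraph src tgt Set.univ).Connected) :
    (redIncMatrix R src tgt v₀).mulVec.Injective :=
  (injective_iff_map_eq_zero (mulVecLin _)).2 fun g hg =>
    (connected_edgeGraph_iff_ker_redIncMatrix R v₀).1 h g fun e _ => congrFun hg e

theorem det_redIncMatrix_submatrix_ne_zero_iff [Fintype V] {R : Type*} [CommRing R] [IsDomain R]
    {v₀ : V} (s : {v // v ≠ v₀} → E) :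
    ((redIncMatrix R src tgt v₀).submatrix s id).det ≠ 0 ↔
      (edgeGraph src tgt (Set.range s)).Connected := by
  rw [connected_edgeGraph_iff_ker_redIncMatrix R v₀, ne_eq, ← exists_mulVec_eq_zero_iff]
  simp only [not_exists, not_and', Set.forall_mem_range, not_not, ne_eq]
  exact forall_congr' fun g => imp_congr_left funext_iff

theorem isUnit_det_redIncMatrix_submatrix_int [Fintype V] {v₀ : V} {s : {v // v ≠ v₀} → E}
    (hs : (edgeGraph src tgt (Set.range s)).Connected) :
    IsUnit ((redIncMatrix ℤ src tgt v₀).submatrix s id).det := by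
  rw [Int.isUnit_iff_natAbs_eq, Nat.eq_one_iff_not_exists_prime_dvd]
  intro q hq hdvd
  have : Fact q.Prime := ⟨hq⟩
  refine (det_redIncMatrix_submatrix_ne_zero_iff (R := ZMod q) s).2 hs ?_
  rwa [← cast_det_redIncMatrix_submatrix, ZMod.intCast_zmod_eq_zero_iff_dvd, Int.natCast_dvd]

open scoped Classical in
theorem det_redIncMatrix_submatrix_sq [Fintype V] (R : Type*) [CommRing R] {v₀ : V}
    (s : {v // v ≠ v₀} → E) :
    ((redIncMatrix R src tgt v₀).submatrix s id).det ^ 2 =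
      if (edgeGraph src tgt (Set.range s)).Connected then 1 else 0 := by
  rw [← cast_det_redIncMatrix_submatrix]
  split_ifs with hs
  · rw [← Int.cast_pow, Int.isUnit_sq (isUnit_det_redIncMatrix_submatrix_int hs), Int.cast_one]
  · rw [not_ne_iff.1 (mt (det_redIncMatrix_submatrix_ne_zero_iff s).1 hs), Int.cast_zero,
      zero_pow two_ne_zero]

variable [Fintype E] [DecidableEq E]

open scoped Classical in
theorem det_weightedGram_redIncMatrix [Fintype V] {R : Type*} [CommRing R] (v₀ : V)
    (x : E → R) :
    (weightedGram (redIncMatrix R src tgt v₀) x).det =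
      ∑ T : Finset E with #T = Fintype.card V - 1 ∧ (edgeGraph src tgt T).Connected,
        ∏ e ∈ T, x e := by
  have hcard : Fintype.card {v // v ≠ v₀} = Fintype.card V - 1 := by simp
  let enum (T : {T : Finset E // #T = Fintype.card {v // v ≠ v₀}}) : {v // v ≠ v₀} ≃ T.1 :=
    Fintype.equivOfCardEq (T.2.symm.trans (Fintype.card_coe T.1).symm)
  simp only [det_weightedGram _ _ enum, det_redIncMatrix_submatrix_sq, range_coe_equiv,
    mul_ite, mul_one, mul_zero]
  rw [← filter_filter, sum_filter, ← hcard]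
  exact (sum_subtype _ (by simp) fun T : Finset E =>
    if (edgeGraph src tgt T).Connected then ∏ e ∈ T, x e else 0).symm

theorem eq_zero_of_weightedGram_redIncMatrix_eq_zero [Finite V] {R : Type*} [CommRing R] {v₀ : V}
    (hinj : Function.Injective fun e => s(src e, tgt e)) (hne : ∀ e, src e ≠ tgt e)
    {x : E → R} (hx : weightedGram (redIncMatrix R src tgt v₀) x = 0) : x = 0 := by
  cases nonempty_fintype V
  have hpolar (f g : V → R) :
      ∑ e, x e * ((f (src e) - f (tgt e)) * (g (src e) - g (tgt e))) = 0 := by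
    have := dotProduct_weightedGram_mulVec (redIncMatrix R src tgt v₀) x
      (fun w => f w - f v₀) (fun w => g w - g v₀)
    simpa only [hx, zero_mulVec, dotProduct_zero, redIncMatrix_mulVec_sub, eq_comm] using this
  ext e
  have := hpolar (Pi.single (src e) 1) (Pi.single (tgt e) 1)
  rw [Fintype.sum_eq_single e] at this
  · simpa [hne e, (hne e).symm] using this
  · intro e' he'
    have hends := mt (@hinj e' e) he'
    have hloop := (hne e).symm
    simp only [Sym2.eq_iff] at hends
    simp only [Pi.single_apply]
    split_ifs <;> simp_all

end Incidence

section Orientation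

variable {V : Type*} {G : SimpleGraph V} {src tgt : G.edgeSet → V}

theorem exists_orientation (G : SimpleGraph V) :
    ∃ src tgt : G.edgeSet → V, ∀ e, s(src e, tgt e) = (e : Sym2 V) := by
  choose ends hends using fun e : G.edgeSet => Sym2.mk_surjective e.1
  exact ⟨fun e => (ends e).1, fun e => (ends e).2, hends⟩

theorem src_ne_tgt (hends : ∀ e, s(src e, tgt e) = (e : Sym2 V)) (e : G.edgeSet) :
    src e ≠ tgt e :=
  G.ne_of_adj (hends e ▸ e.2 : s(src e, tgt e) ∈ G.edgeSet)

theorem edgeGraph_eq_fromEdgeSet (hends : ∀ e, s(src e, tgt e) = (e : Sym2 V))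
    (S : Set G.edgeSet) :
    edgeGraph src tgt S = SimpleGraph.fromEdgeSet (Subtype.val '' S) := by
  simp only [edgeGraph, hends]

theorem edgeGraph_univ (hends : ∀ e, s(src e, tgt e) = (e : Sym2 V)) :
    edgeGraph src tgt Set.univ = G := by
  rw [edgeGraph_eq_fromEdgeSet hends, Subtype.coe_image_univ, SimpleGraph.fromEdgeSet_edgeSet]

end Orientation

section Kirchhoff

open Finset

variable {V : Type} [Fintype V] [DecidableEq V] {G : SimpleGraph V} [Fintype G.edgeSet]

theorem eval_kirchhoff {src tgt : G.edgeSet → V} (hends : ∀ e, s(src e, tgt e) = (e : Sym2 V))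
    (v₀ : V) (x : G.edgeSet → ℝ) :
    eval x (kirchhoff G) = (weightedGram (redIncMatrix ℝ src tgt v₀) x).det := by
  classical
  rw [det_weightedGram_redIncMatrix, kirchhoff, ← sum_filter, map_sum]
  refine sum_congr (Finset.ext fun T => ?_) fun T _ => by simp only [map_prod, eval_X]
  rw [mem_filter, mem_filter, IsSpanningTree, edgeGraph_eq_fromEdgeSet hends]

theorem degreeOf_kirchhoff_le_one (i : G.edgeSet) : degreeOf i (kirchhoff G) ≤ 1 := by
  classical
  rw [kirchhoff, ← sum_filter]
  refine (degreeOf_sum_le _ _ _).trans (Finset.sup_le fun T _ => ?_)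
  calc degreeOf i (∏ e ∈ T, X e : MvPolynomial G.edgeSet ℝ)
      ≤ ∑ e ∈ T, degreeOf i (X e : MvPolynomial G.edgeSet ℝ) := degreeOf_prod_le _ _ _
    _ = if i ∈ T then 1 else 0 := by simp only [degreeOf_X, sum_ite_eq]
    _ ≤ 1 := by split_ifs <;> simp

end Kirchhoff

/-- for a finite connected simple graph `Γ` with `r + 1 ≥ 3` vertices and
`n ≥ 3` edges, the Hessian matrix of the Kirchhoff polynomial evaluated at any point `a` of the
open positive orthant is nonsingular, has exactly `n - 1` negative eigenvalues and exactly one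
positive eigenvalue; in particular `(-1)^(n-1) * det H > 0`. -/
theorem kirchhoff_hessian_signature
    {V : Type} [Fintype V] [DecidableEq V] (G : SimpleGraph V) [Fintype G.edgeSet]
    (hconn : G.Connected) (r n : ℕ)
    (hV : Fintype.card V = r + 1) (hr : 3 ≤ r + 1)
    (hE : Fintype.card G.edgeSet = n) (hn : 3 ≤ n)
    (a : G.edgeSet → ℝ) (ha : ∀ e, 0 < a e)
    (H : Matrix G.edgeSet G.edgeSet ℝ)
    (hH : H = Matrix.of fun i j => eval a (pderiv i (pderiv j (kirchhoff G)))) :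
    H.det ≠ 0 ∧
    (∃ hherm : H.IsHermitian,
      (Finset.univ.filter fun i => hherm.eigenvalues i < 0).card = n - 1 ∧
      (Finset.univ.filter fun i => 0 < hherm.eigenvalues i).card = 1) ∧
    0 < (-1 : ℝ) ^ (n - 1) * H.det := by
  obtain ⟨v₀⟩ := hconn.nonempty
  obtain ⟨src, tgt, hends⟩ := exists_orientation G
  have hL : (weightedGram (redIncMatrix ℝ src tgt v₀) a).PosDef :=
    posDef_weightedGram
      (redIncMatrix_mulVec_injective ℝ v₀ ((edgeGraph_univ hends).symm ▸ hconn)) ha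
  have hinj : ∀ x, weightedGram (redIncMatrix ℝ src tgt v₀) x = 0 → x = 0 := fun _ =>
    eq_zero_of_weightedGram_redIncMatrix_eq_zero
      (by simpa only [hends] using Subtype.val_injective) (src_ne_tgt hends)
  have hroot : 1 < Fintype.card {v // v ≠ v₀} := by
    rw [Fintype.card_subtype_compl, Fintype.card_subtype_eq]
    lia
  obtain ⟨k, hk, hneg⟩ := exists_unique_pos_eigenvalue_hessianMatrix degreeOf_kirchhoff_le_one
    (eval_kirchhoff hends v₀) hL hinj hroot
  obtain rfl : H = hessianMatrix (kirchhoff G) a := hH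
  have hherm := isHermitian_hessianMatrix (kirchhoff G) a
  have hsign : 0 < (-1) ^ (n - 1) * (hessianMatrix (kirchhoff G) a).det := by
    rw [hherm.det_eq_prod_eigenvalues, ← hE]
    exact neg_one_pow_mul_prod_pos_of_unique_pos hk hneg
  exact ⟨right_ne_zero_of_mul hsign.ne',
    ⟨hherm, hE ▸ card_filter_neg_of_unique_pos hk hneg, card_filter_pos_of_unique_pos hk hneg⟩,
    hsign⟩
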